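/- Let K be a field, fix s = (s_1,…,s_m) ∈ ℕ^m and δ ∈ ℤ_{>0}, with the associated α_j, β_j, m̄, expansion-compression matrix E and expanded shift s̄ as in the column partial linearization, and let Z ∈ K[x]^{(m̄−m)×m̄} be the block diagonal matrix diag(Z_1,…,Z_m) where Z_j ∈ K[x]^{(α_j−1)×α_j} has x^δ on the diagonal, −1 on the superdiagonal and zeros elsewhere. Then Z is the unique basis of the left kernel of E which is in 0-Popov form; moreover Z is also in −s̄-Popov form, rdeg_{−s̄}(Z) = 0, and the −s̄-pivot profile of Z is the list of pairs (α_1+⋯+α_{j−1}+i, δ) for 1 ≤ j ≤ m and 1 ≤ i ≤ α_j − 1. -/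

import Mathlib

open Polynomial Matrix

/-- The degree of a polynomial, viewed in `ℤ ∪ {-∞}`. -/
noncomputable def degZ {K : Type*} [Field K] (p : K[X]) : WithBot ℤ :=
  p.degree.map fun a : ℕ => (a : ℤ)

/-- The `s`-row degree of a (row) vector of polynomials. -/
noncomputable def rdegRow {K : Type*} [Field K] {ν : Type*} [Fintype ν]
    (s : ν → ℤ) (v : ν → K[X]) : WithBot ℤ :=
  Finset.univ.sup fun j => degZ (v j) + (s j : WithBot ℤ)

/-- The `s`-row degree of a polynomial matrix. -/
noncomputable def rdeg {K : Type*} [Field K] {ι ν : Type*} [Fintype ν]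
    (s : ν → ℤ) (P : Matrix ι ν K[X]) : ι → WithBot ℤ :=
  fun i => rdegRow s (P i)

/-- The `t`-column degree of a polynomial matrix. -/
noncomputable def cdeg {K : Type*} [Field K] {ι ν : Type*} [Fintype ι]
    (t : ι → ℤ) (P : Matrix ι ν K[X]) : ν → WithBot ℤ :=
  fun j => Finset.univ.sup fun i => degZ (P i j) + (t i : WithBot ℤ)

/-- Coefficient of integer degree `d` of a polynomial (0 if `d < 0`). -/
noncomputable def coeffZ {K : Type*} [Field K] (p : K[X]) (d : ℤ) : K :=
  if 0 ≤ d then p.coeff d.toNat else 0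

/-- The `s`-leading matrix of a polynomial matrix. -/
noncomputable def lm {K : Type*} [Field K] {ι ν : Type*} [Fintype ν]
    (s : ν → ℤ) (P : Matrix ι ν K[X]) : Matrix ι ν K :=
  Matrix.of fun i j =>
    (rdeg s P i).recBotCoe 0 fun t => coeffZ (P i j) (t - s j)

/-- `P` is in `s`-reduced form: its `s`-leading matrix has full row rank,
i.e. its rows are linearly independent over `K`. -/
def IsReducedForm {K : Type*} [Field K] {ι ν : Type*} [Fintype ν]
    (s : ν → ℤ) (P : Matrix ι ν K[X]) : Prop :=
  LinearIndependent K fun i => lm s P i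

open Classical in
/-- The `s`-pivot index of a row vector: the largest column index where the
`s`-row degree is attained (with a nonzero entry); `⊥` for the zero row. -/
noncomputable def piv {K : Type*} [Field K] {ν : Type*} [Fintype ν] [LinearOrder ν]
    (s : ν → ℤ) (v : ν → K[X]) : WithBot ν :=
  (Finset.univ.filter fun j => v j ≠ 0 ∧ degZ (v j) + (s j : WithBot ℤ) = rdegRow s v).max

/-- The `s`-pivot degree of a row vector (junk value `0` for the zero row). -/
noncomputable def pivDeg {K : Type*} [Field K] {ν : Type*} [Fintype ν] [LinearOrder ν]
    (s : ν → ℤ) (v : ν → K[X]) : ℕ :=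
  ((piv s v).map fun j => (v j).natDegree).unbotD 0

/-- `P` is in `s`-weak Popov form: no zero row and strictly increasing `s`-pivot indices. -/
def IsWeakPopov {K : Type*} [Field K] {ι ν : Type*} [Fintype ν] [LinearOrder ν] [Preorder ι]
    (s : ν → ℤ) (P : Matrix ι ν K[X]) : Prop :=
  (∀ i, piv s (P i) ≠ ⊥) ∧ StrictMono fun i => piv s (P i)

/-- `P` is in `s`-unordered weak Popov form: no zero row and pairwise distinct
`s`-pivot indices. -/
def IsUWeakPopov {K : Type*} [Field K] {ι ν : Type*} [Fintype ν] [LinearOrder ν]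
    (s : ν → ℤ) (P : Matrix ι ν K[X]) : Prop :=
  (∀ i, piv s (P i) ≠ ⊥) ∧ Function.Injective fun i => piv s (P i)

/-- `P` is in `s`-Popov form: `s`-weak Popov, monic pivots, and each pivot entry
has degree strictly larger than the other entries of its column. -/
def IsPopov {K : Type*} [Field K] {ι ν : Type*} [Fintype ν] [LinearOrder ν] [Preorder ι]
    (s : ν → ℤ) (P : Matrix ι ν K[X]) : Prop :=
  IsWeakPopov s P ∧
    ∀ i (j : ν), piv s (P i) = (j : WithBot ν) →
      (P i j).Monic ∧ ∀ i', i' ≠ i → (P i' j).degree < (P i j).degree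

/-- The row space of a polynomial matrix. -/
noncomputable def rowSpace {K : Type*} [Field K] {ι ν : Type*} (P : Matrix ι ν K[X]) :
    Submodule K[X] (ν → K[X]) :=
  Submodule.span K[X] (Set.range fun i => P i)

/-- The rows of `B` form a basis of the module `M`. -/
def IsBasisOf {K : Type*} [Field K] {ι ν : Type*} (B : Matrix ι ν K[X])
    (M : Submodule K[X] (ν → K[X])) : Prop :=
  LinearIndependent K[X] (fun i => B i) ∧
    Submodule.span K[X] (Set.range fun i => B i) = M

/-- The left kernel of a polynomial matrix. -/
noncomputable def leftKernel {K : Type*} [Field K] {ι ν : Type*} [Fintype ι]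
    (F : Matrix ι ν K[X]) : Submodule K[X] (ι → K[X]) :=
  LinearMap.ker F.vecMulLinear

/-! ### Column partial linearization (Definition 5.3) -/

/-- Number of parts `α_j = ⌈s_j/δ⌉` (with `α_j = 1` when `s_j = 0`). -/
def cplα (δ : ℕ) {m : ℕ} (s : Fin m → ℕ) (j : Fin m) : ℕ :=
  max 1 ((s j + δ - 1) / δ)

/-- Remainder `β_j` so that `s_j = (α_j − 1)δ + β_j`. -/
def cplβ (δ : ℕ) {m : ℕ} (s : Fin m → ℕ) (j : Fin m) : ℕ :=
  s j - (cplα δ s j - 1) * δ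

/-- Index set of the expanded columns: pairs `(j, i)` with `0 ≤ i < α_j`,
ordered lexicographically (this corresponds to `α_1 + ⋯ + α_{j-1} + i`). -/
abbrev CplIdx (δ : ℕ) {m : ℕ} (s : Fin m → ℕ) := Lex ((j : Fin m) × Fin (cplα δ s j))

/-- The expansion-compression matrix `E`: block diagonal with `j`-th block the
column `(1, x^δ, …, x^{(α_j−1)δ})ᵀ`. -/
noncomputable def cplE (K : Type*) [Field K] (δ : ℕ) {m : ℕ} (s : Fin m → ℕ) :
    Matrix (CplIdx δ s) (Fin m) K[X] :=
  Matrix.of fun c j =>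
    if (ofLex c).1 = j then (Polynomial.X : K[X]) ^ (((ofLex c).2 : ℕ) * δ) else 0

/-- The expanded shift `s̄`: within block `j`, `δ` everywhere except `β_j` at
the last position. -/
def cplShift (δ : ℕ) {m : ℕ} (s : Fin m → ℕ) (c : CplIdx δ s) : ℕ :=
  if ((ofLex c).2 : ℕ) = cplα δ s (ofLex c).1 - 1 then cplβ δ s (ofLex c).1 else δ

/-- The block diagonal matrix `Z = diag(Z_1,…,Z_m)` with
`Z_j ∈ K[x]^{(α_j−1)×α_j}` having `x^δ` on the diagonal and `−1` on the
superdiagonal. -/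
noncomputable def cplZ (K : Type*) [Field K] (δ : ℕ) {m : ℕ} (s : Fin m → ℕ) :
    Matrix (Lex ((j : Fin m) × Fin (cplα δ s j - 1))) (CplIdx δ s) K[X] :=
  Matrix.of fun r c =>
    if (ofLex r).1 = (ofLex c).1 then
      (if ((ofLex c).2 : ℕ) = ((ofLex r).2 : ℕ) then (Polynomial.X : K[X]) ^ δ
       else if ((ofLex c).2 : ℕ) = ((ofLex r).2 : ℕ) + 1 then -1 else 0)
    else 0

/-!
Order the monomial rows `x^d e_j` by `(d + s_j, j)` lexicographically; the `s`-pivot of a row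
carries its leading monomial. If the pivot indices of the rows of `P` are distinct, the summands of
a linear combination have distinct leading monomials, so the largest one is never cancelled. Hence
the rows are independent, and the pivot of any nonzero row in their span lies at the pivot index of
some row of `P` and has at least its degree, which forces two `s`-Popov bases of one module to
agree.

For `Z`, each row says that `e_{j,i+1}` is congruent to `x^δ e_{j,i}` modulo the row space, so
`e_{j,i}` is congruent to `x^{iδ} e_{j,0}` and `p` to `∑_j (p E)_j e_{j,0}`, which vanishes for `p`
in the kernel of `E`. A row of `Z` has its pivot at `x^δ` for every shift under which the entry `-1`
lies strictly below it, and both `0` and `-s̄` are such shifts.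
-/

section TermOrder

variable {K : Type*} [Field K] {ν : Type*} {s : ν → ℤ} {p q : K[X]} {j k : ν}

theorem degZ_zero : degZ (0 : K[X]) = ⊥ := by
  simp [degZ]

theorem degZ_of_ne_zero (hp : p ≠ 0) : degZ p = ((p.natDegree : ℤ) : WithBot ℤ) := by
  rw [degZ, degree_eq_natDegree hp, WithBot.map_natCast]
  rfl

theorem degZ_ne_bot (hp : p ≠ 0) : degZ p ≠ ⊥ := by
  simp [degZ_of_ne_zero hp]

theorem degZ_lt_degZ : degZ p < degZ q ↔ p.degree < q.degree :=
  (Nat.strictMono_cast (α := ℤ)).withBot_map.lt_iff_lt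

theorem degZ_le_degZ : degZ p ≤ degZ q ↔ p.degree ≤ q.degree :=
  (Nat.strictMono_cast (α := ℤ)).withBot_map.le_iff_le

theorem degZ_mul : degZ (p * q) = degZ p + degZ q := by
  rw [degZ, degree_mul]
  exact WithBot.map_add (Nat.castAddMonoidHom ℤ) _ _

/-- The position of the leading term of `p` times the `j`-th unit row in the `s`-shifted
term-over-position order; it is `(-∞, j)` for `p = 0`. -/
noncomputable def lexDeg (s : ν → ℤ) (p : K[X]) (j : ν) : WithBot ℤ ×ₗ ν :=
  toLex (degZ p + (s j : WithBot ℤ), j)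

theorem degZ_add_le_of_lexDeg_lt [LT ν] (h : lexDeg s p j < lexDeg s q k) :
    degZ p + (s j : WithBot ℤ) ≤ degZ q + (s k : WithBot ℤ) :=
  (Prod.Lex.toLex_lt_toLex.mp h).elim le_of_lt fun h => h.1.le

theorem lexDeg_lt_lexDeg [Preorder ν] : lexDeg s p j < lexDeg s q j ↔ p.degree < q.degree := by
  simp [lexDeg, Prod.Lex.toLex_lt_toLex, WithBot.add_lt_add_iff_right, degZ_lt_degZ]

theorem lexDeg_le_lexDeg [Preorder ν] : lexDeg s p j ≤ lexDeg s q j ↔ p.degree ≤ q.degree := by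
  simp [lexDeg, Prod.Lex.toLex_le_toLex, ← le_iff_lt_or_eq, WithBot.add_le_add_iff_right,
    degZ_le_degZ]

theorem degree_add_eq_left_of_lexDeg_lt [Preorder ν] (h : lexDeg s q j < lexDeg s p j) :
    (p + q).degree = p.degree :=
  degree_add_eq_left_of_degree_lt (lexDeg_lt_lexDeg.mp h)

theorem lexDeg_mul_lt [LT ν] {u : K[X]} (hu : u ≠ 0) (h : lexDeg s p j < lexDeg s q k) :
    lexDeg s (u * p) j < lexDeg s (u * q) k := by
  simp only [lexDeg, Prod.Lex.toLex_lt_toLex, degZ_mul, add_assoc] at h ⊢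
  exact h.imp (WithBot.add_lt_add_left (degZ_ne_bot hu)) fun h => ⟨by rw [h.1], h.2⟩

theorem lexDeg_zero_lt [LT ν] (hq : q ≠ 0) : lexDeg s (0 : K[X]) j < lexDeg s q k :=
  Prod.Lex.toLex_lt_toLex.mpr <| .inl <| by
    simp [degZ_zero, bot_lt_iff_ne_bot, degZ_ne_bot hq]

theorem lexDeg_add_lt [Preorder ν] {L : WithBot ℤ ×ₗ ν} (hp : lexDeg s p j < L)
    (hq : lexDeg s q j < L) : lexDeg s (p + q) j < L := by
  rcases le_total p.degree q.degree with h | h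
  · refine lt_of_le_of_lt ?_ hq
    exact lexDeg_le_lexDeg.mpr ((degree_add_le p q).trans (max_le h le_rfl))
  · refine lt_of_le_of_lt ?_ hp
    exact lexDeg_le_lexDeg.mpr ((degree_add_le p q).trans (max_le le_rfl h))

theorem lexDeg_sum_lt [Preorder ν] {ι : Type*} {t : Finset ι} {f : ι → K[X]}
    {L : WithBot ℤ ×ₗ ν} (h0 : lexDeg s (0 : K[X]) j < L) (h : ∀ i ∈ t, lexDeg s (f i) j < L) :
    lexDeg s (∑ i ∈ t, f i) j < L :=
  Finset.sum_induction f (lexDeg s · j < L) (fun _ _ => lexDeg_add_lt) h0 h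

end TermOrder

section Pivot

variable {K : Type*} [Field K] {ν : Type*} [Fintype ν] {s : ν → ℤ} {v : ν → K[X]} {j : ν}

theorem degZ_add_le_rdegRow (k : ν) : degZ (v k) + (s k : WithBot ℤ) ≤ rdegRow s v :=
  Finset.le_sup (f := fun k => degZ (v k) + (s k : WithBot ℤ)) (Finset.mem_univ k)

variable [LinearOrder ν]

open Classical in
theorem rdegRow_eq_of_piv_eq (h : piv s v = j) : rdegRow s v = degZ (v j) + (s j : WithBot ℤ) :=
  (Finset.mem_filter.mp (Finset.mem_of_max h)).2.2.symm

theorem pivDeg_eq_of_piv_eq (h : piv s v = j) : pivDeg s v = (v j).natDegree := by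
  simp [pivDeg, h]

open Classical in
theorem piv_eq_coe_iff :
    piv s v = j ↔ v j ≠ 0 ∧ ∀ k, k ≠ j → lexDeg s (v k) k < lexDeg s (v j) j := by
  refine ⟨fun h => ?_, fun ⟨hj0, hlt⟩ => ?_⟩
  · have hj0 : v j ≠ 0 := (Finset.mem_filter.mp (Finset.mem_of_max h)).2.1
    have hj := rdegRow_eq_of_piv_eq h
    refine ⟨hj0, fun k hk => Prod.Lex.toLex_lt_toLex.mpr ?_⟩
    refine (hj ▸ degZ_add_le_rdegRow k).lt_or_eq.imp_right fun heq => ⟨heq, ?_⟩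
    have hk0 : v k ≠ 0 := by
      intro hz
      rw [hz, degZ_zero, WithBot.bot_add, degZ_of_ne_zero hj0, ← WithBot.coe_add] at heq
      exact WithBot.bot_ne_coe heq
    refine lt_of_le_of_ne (Finset.le_max_of_eq ?_ h) hk
    exact Finset.mem_filter.mpr ⟨Finset.mem_univ k, hk0, heq.trans hj.symm⟩
  · have hj : rdegRow s v = degZ (v j) + (s j : WithBot ℤ) := by
      refine le_antisymm (Finset.sup_le fun k _ => ?_) (degZ_add_le_rdegRow j)
      rcases eq_or_ne k j with rfl | hk
      exacts [le_rfl, degZ_add_le_of_lexDeg_lt (hlt k hk)]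
    refine le_antisymm (Finset.max_le fun k hk => WithBot.coe_le_coe.mpr ?_)
      (Finset.le_max (by simp [hj0, hj]))
    by_contra! hjk
    have hkj := Prod.Lex.toLex_lt_toLex.mp (hlt k hjk.ne')
    rw [← hj, (Finset.mem_filter.mp hk).2.2] at hkj
    exact hkj.elim (lt_irrefl _) fun h => hjk.not_gt h.2

theorem apply_ne_zero_of_piv_eq (h : piv s v = j) : v j ≠ 0 :=
  (piv_eq_coe_iff.mp h).1

theorem ne_zero_of_piv_ne_bot (h : piv s v ≠ ⊥) : v ≠ 0 := by
  obtain ⟨j, hj⟩ := WithBot.ne_bot_iff_exists.mp h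
  exact fun h0 => apply_ne_zero_of_piv_eq hj.symm (congrFun h0 j)

theorem lexDeg_le_of_piv_eq (h : piv s v = j) (k : ν) : lexDeg s (v k) k ≤ lexDeg s (v j) j := by
  rcases eq_or_ne k j with rfl | hk
  exacts [le_rfl, ((piv_eq_coe_iff.mp h).2 k hk).le]

theorem piv_smul_eq {u : K[X]} (hu : u ≠ 0) (h : piv s v = j) : piv s (u • v) = j :=
  piv_eq_coe_iff.mpr ⟨mul_ne_zero hu (apply_ne_zero_of_piv_eq h), fun k hk =>
    lexDeg_mul_lt hu ((piv_eq_coe_iff.mp h).2 k hk)⟩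

theorem piv_add_eq_of_lexDeg_lt {w : ν → K[X]} (hv : piv s v = j)
    (hw : ∀ k, lexDeg s (w k) k < lexDeg s (v j) j) : piv s (v + w) = j := by
  have hdeg := degree_add_eq_left_of_lexDeg_lt (hw j)
  refine piv_eq_coe_iff.mpr ⟨fun h => ?_, fun k hk => ?_⟩
  · rw [← Pi.add_apply, h, degree_zero, eq_comm, degree_eq_bot] at hdeg
    exact apply_ne_zero_of_piv_eq hv hdeg
  · exact (lexDeg_add_lt ((piv_eq_coe_iff.mp hv).2 k hk) (hw k)).trans_le
      (lexDeg_le_lexDeg.mpr hdeg.ge)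

theorem piv_single_add_single {a b : ν} {p q : K[X]} (hab : a ≠ b) (hp : p ≠ 0)
    (h : lexDeg s q b < lexDeg s p a) : piv s (Pi.single a p + Pi.single b q) = a := by
  refine piv_eq_coe_iff.mpr ⟨by simpa [hab], fun k hk => ?_⟩
  rcases eq_or_ne k b with rfl | hb
  · simpa [hab, hab.symm] using h
  · simpa [hab, hk, hb] using lexDeg_zero_lt hp

end Pivot

theorem row_mem_rowSpace {K : Type*} [Field K] {ι ν : Type*} (P : Matrix ι ν K[X]) (i : ι) :
    P i ∈ rowSpace P :=
  Submodule.subset_span ⟨i, rfl⟩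

section PopovUniqueness

variable {K : Type*} [Field K] {ι ν : Type*} [Fintype ν] [LinearOrder ν] {s : ν → ℤ}
  {P Q : Matrix ι ν K[X]}

theorem IsUWeakPopov.exists_piv_linearCombination_eq (hP : IsUWeakPopov s P) {u : ι →₀ K[X]}
    (hu : u ≠ 0) :
    ∃ (i : ι) (j : ν), u i ≠ 0 ∧ piv s (P i) = j ∧
      piv s (Finsupp.linearCombination K[X] (fun k => P k) u) = j ∧
      (Finsupp.linearCombination K[X] (fun k => P k) u j).degree = (u i * P i j).degree := by
  classical
  choose π hπ using fun i => WithBot.ne_bot_iff_exists.mp (hP.1 i)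
  obtain ⟨i, hi, hmax⟩ := u.support.exists_max_image
    (fun k => lexDeg s ((u k • P k) (π k)) (π k)) (Finsupp.support_nonempty_iff.mpr hu)
  have hpiv : ∀ k ∈ u.support, piv s (u k • P k) = π k := fun k hk =>
    piv_smul_eq (Finsupp.mem_support_iff.mp hk) (hπ k).symm
  have hsum : Finsupp.linearCombination K[X] (fun k => P k) u =
      u i • P i + ∑ k ∈ u.support.erase i, u k • P k :=
    (Finset.add_sum_erase _ (fun k => u k • P k) hi).symm
  have hlt : ∀ k ∈ u.support.erase i, ∀ c,
      lexDeg s ((u k • P k) c) c < lexDeg s ((u i • P i) (π i)) (π i) := by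
    intro k hk c
    obtain ⟨hki, hk⟩ := Finset.mem_erase.mp hk
    have hne : π k ≠ π i := fun h => hki (hP.2 (by simp [← hπ, h]))
    exact (lexDeg_le_of_piv_eq (hpiv k hk) c).trans_lt <|
      (hmax k hk).lt_of_ne fun h => hne (congrArg (fun x => (ofLex x).2) h)
  have hrest : ∀ c, lexDeg s ((∑ k ∈ u.support.erase i, u k • P k) c) c <
      lexDeg s ((u i • P i) (π i)) (π i) := fun c => by
    rw [Finset.sum_apply]
    exact lexDeg_sum_lt (lexDeg_zero_lt (apply_ne_zero_of_piv_eq (hpiv i hi)))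
      fun k hk => hlt k hk c
  refine ⟨i, π i, Finsupp.mem_support_iff.mp hi, (hπ i).symm, ?_, ?_⟩ <;> rw [hsum]
  exacts [piv_add_eq_of_lexDeg_lt (hpiv i hi) hrest, degree_add_eq_left_of_lexDeg_lt (hrest (π i))]

theorem IsUWeakPopov.linearIndependent (hP : IsUWeakPopov s P) :
    LinearIndependent K[X] (fun i => P i) := by
  refine linearIndependent_iff.mpr fun u hu => by_contra fun hu0 => ?_
  obtain ⟨i, j, -, -, hj, -⟩ := hP.exists_piv_linearCombination_eq hu0
  exact apply_ne_zero_of_piv_eq hj (congrFun hu j)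

theorem IsUWeakPopov.exists_piv_eq_of_mem_rowSpace (hP : IsUWeakPopov s P) {v : ν → K[X]}
    (hv : v ∈ rowSpace P) (hv0 : v ≠ 0) :
    ∃ (i : ι) (j : ν), piv s (P i) = j ∧ piv s v = j ∧ (P i j).degree ≤ (v j).degree := by
  obtain ⟨u, rfl⟩ := Finsupp.mem_span_range_iff_exists_finsupp.mp hv
  obtain ⟨i, j, hui, hPj, hvj, hdeg⟩ :=
    hP.exists_piv_linearCombination_eq (u := u) (by rintro rfl; simp at hv0)
  refine ⟨i, j, hPj, hvj, (degree_le_mul_left _ hui).trans_eq ?_⟩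
  rw [mul_comm, ← hdeg]
  rfl

variable [LinearOrder ι]

theorem IsWeakPopov.isUWeakPopov (hP : IsWeakPopov s P) : IsUWeakPopov s P :=
  ⟨hP.1, hP.2.injective⟩

theorem IsWeakPopov.piv_eq_of_rowSpace_eq (hP : IsWeakPopov s P) (hQ : IsWeakPopov s Q)
    (hPQ : rowSpace P = rowSpace Q) (i : ι) : piv s (P i) = piv s (Q i) := by
  have range_subset : ∀ {A B : Matrix ι ν K[X]}, IsWeakPopov s A → IsWeakPopov s B →
      rowSpace A = rowSpace B →
      Set.range (fun i => piv s (A i)) ⊆ Set.range (fun i => piv s (B i)) := by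
    rintro A B hA hB hAB _ ⟨i, rfl⟩
    obtain ⟨k, j, hk, hj, -⟩ := hB.isUWeakPopov.exists_piv_eq_of_mem_rowSpace
      (hAB ▸ row_mem_rowSpace A i) (ne_zero_of_piv_ne_bot (hA.1 i))
    exact ⟨k, hk.trans hj.symm⟩
  have : Finite ι := .of_injective _ hP.2.injective
  exact congrFun ((hP.2.range_inj hQ.2).mp
    ((range_subset hP hQ hPQ).antisymm (range_subset hQ hP hPQ.symm))) i

theorem IsWeakPopov.degree_le_of_rowSpace_eq (hP : IsWeakPopov s P) (hQ : IsWeakPopov s Q)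
    (hPQ : rowSpace P = rowSpace Q) {i : ι} {j : ν} (hj : piv s (P i) = j) :
    (Q i j).degree ≤ (P i j).degree := by
  obtain ⟨k, j', hk, hi, hdeg⟩ := hQ.isUWeakPopov.exists_piv_eq_of_mem_rowSpace
    (hPQ ▸ row_mem_rowSpace P i) (ne_zero_of_piv_ne_bot (hP.1 i))
  obtain rfl : j' = j := WithBot.coe_injective (hi.symm.trans hj)
  have hki : k = i := hQ.2.injective <|
    hk.trans (hi.symm.trans (hP.piv_eq_of_rowSpace_eq hQ hPQ i))
  rwa [hki] at hdeg

theorem IsPopov.eq_of_rowSpace_eq (hP : IsPopov s P) (hQ : IsPopov s Q)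
    (hPQ : rowSpace P = rowSpace Q) : P = Q := by
  have hpiv : ∀ {k} {j : ν}, piv s (P k) = j → piv s (Q k) = j := fun {k _} h =>
    (hP.1.piv_eq_of_rowSpace_eq hQ.1 hPQ k).symm.trans h
  have hdeg : ∀ {k} {j : ν}, piv s (P k) = j → (P k j).degree = (Q k j).degree := fun h =>
    (hQ.1.degree_le_of_rowSpace_eq hP.1 hPQ.symm (hpiv h)).antisymm
      (hP.1.degree_le_of_rowSpace_eq hQ.1 hPQ h)
  funext i
  by_contra hne
  have hmem : P i - Q i ∈ rowSpace P :=
    sub_mem (row_mem_rowSpace P i) (hPQ ▸ row_mem_rowSpace Q i)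
  obtain ⟨k, j, hPk, -, hle⟩ :=
    hP.1.isUWeakPopov.exists_piv_eq_of_mem_rowSpace hmem (sub_ne_zero.mpr hne)
  obtain ⟨hPmonic, hPcol⟩ := hP.2 k j hPk
  obtain ⟨hQmonic, hQcol⟩ := hQ.2 k j (hpiv hPk)
  refine hle.not_gt ?_
  rcases eq_or_ne i k with rfl | hik
  · exact degree_sub_lt_left (hdeg hPk) hPmonic.ne_zero
      (hPmonic.leadingCoeff.trans hQmonic.leadingCoeff.symm)
  · exact (degree_sub_le _ _).trans_lt
      (max_lt (hPcol i hik) ((hQcol i hik).trans_eq (hdeg hPk).symm))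

end PopovUniqueness

theorem leftKernel_le_of_single_sub_vecMul_mem {K : Type*} [Field K] {ι κ : Type*} [Fintype ι]
    [DecidableEq ι] [Fintype κ] {F : Matrix ι κ K[X]} {S : Submodule K[X] (ι → K[X])}
    (G : Matrix κ ι K[X]) (h : ∀ i, Pi.single i 1 - F i ᵥ* G ∈ S) : leftKernel F ≤ S := by
  intro p hp
  replace hp : p ᵥ* F = 0 := hp
  have hdecomp : p = ∑ i, p i • (Pi.single i 1 - F i ᵥ* G) := by
    calc p = p ᵥ* 1 - (p ᵥ* F) ᵥ* G := by simp [hp]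
      _ = p ᵥ* (1 - F * G) := by rw [vecMul_sub, vecMul_vecMul]
      _ = ∑ i, p i • (Pi.single i 1 - F i ᵥ* G) := by
        rw [vecMul_eq_sum]
        refine Finset.sum_congr rfl fun i _ => congrArg (p i • ·) ?_
        ext1 j
        simp [mul_apply, one_apply, Pi.single_apply, vecMul, dotProduct, eq_comm]
  rw [hdecomp]
  exact sum_mem fun i _ => S.smul_mem _ (h i)

section ColumnPartialLinearization

/-- The row indices `(j, i)`, `0 ≤ i < α_j - 1`, of `Z`, in lexicographic order. -/
abbrev CplRowIdx (δ : ℕ) {m : ℕ} (s : Fin m → ℕ) := Lex ((j : Fin m) × Fin (cplα δ s j - 1))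

variable {δ m : ℕ} {s : Fin m → ℕ}

/-- The column of the diagonal entry `x^δ` in a given row of `Z`. -/
def cplDiag (r : CplRowIdx δ s) : CplIdx δ s :=
  toLex ⟨(ofLex r).1, Fin.castLE (Nat.sub_le _ 1) (ofLex r).2⟩

/-- The column of the superdiagonal entry `-1` in a given row of `Z`. -/
def cplSuperdiag (r : CplRowIdx δ s) : CplIdx δ s :=
  toLex ⟨(ofLex r).1, ⟨(ofLex r).2 + 1, by have := (ofLex r).2.isLt; omega⟩⟩

theorem cplα_pos (j : Fin m) : 0 < cplα δ s j :=
  Nat.lt_of_lt_of_le one_pos (le_max_left _ _)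

/-- The first column `(j, 0)` of the `j`-th block. -/
def cplFirst (δ : ℕ) {m : ℕ} (s : Fin m → ℕ) (j : Fin m) : CplIdx δ s :=
  toLex ⟨j, ⟨0, cplα_pos j⟩⟩

theorem cplIdx_ext_iff {c d : CplIdx δ s} :
    c = d ↔ (ofLex c).1 = (ofLex d).1 ∧ ((ofLex c).2 : ℕ) = (ofLex d).2 := by
  refine ⟨by rintro rfl; simp, fun ⟨h₁, h₂⟩ => ofLex.injective (Sigma.ext h₁ ?_)⟩
  exact (Fin.heq_ext_iff (congrArg _ h₁)).mpr h₂

theorem cplDiag_strictMono : StrictMono (cplDiag : CplRowIdx δ s → CplIdx δ s) := by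
  rintro _ _ (⟨_, _, h⟩ | ⟨_, _, h⟩)
  exacts [.left _ _ h, .right _ _ h]

theorem cplDiag_ne_cplSuperdiag (r : CplRowIdx δ s) : cplDiag r ≠ cplSuperdiag r := by
  simp [cplDiag, cplSuperdiag, Fin.ext_iff]

theorem cplβ_pos {j : Fin m} (h : 1 < cplα δ s j) : 0 < cplβ δ s j := by
  have hα : cplα δ s j = (s j + δ - 1) / δ := by unfold cplα at h ⊢; omega
  have hle : cplα δ s j * δ ≤ s j + δ - 1 := hα ▸ Nat.div_mul_le_self _ _
  have hpred : cplα δ s j * δ = (cplα δ s j - 1) * δ + δ := by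
    rw [← Nat.succ_mul, Nat.succ_eq_add_one, Nat.sub_add_cancel h.le]
  have hδ : δ ≠ 0 := by rintro rfl; simp [hα] at h
  unfold cplβ
  omega

theorem cplShift_cplDiag (r : CplRowIdx δ s) : cplShift δ s (cplDiag r) = δ :=
  if_neg (ofLex r).2.isLt.ne

theorem cplShift_pos (hδ : 0 < δ) {c : CplIdx δ s} (hc : 1 < cplα δ s (ofLex c).1) :
    0 < cplShift δ s c := by
  unfold cplShift
  split_ifs
  exacts [cplβ_pos hc, hδ]

theorem cplShift_cplSuperdiag_pos (hδ : 0 < δ) (r : CplRowIdx δ s) :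
    0 < cplShift δ s (cplSuperdiag r) :=
  cplShift_pos hδ (Nat.lt_of_sub_pos (Fin.pos (ofLex r).2))

variable {K : Type*} [Field K]

theorem cplE_row (c : CplIdx δ s) :
    cplE K δ s c = Pi.single (ofLex c).1 (X ^ (((ofLex c).2 : ℕ) * δ)) := by
  ext1 j
  simp [cplE, Pi.single_apply, eq_comm]

theorem cplZ_row (r : CplRowIdx δ s) :
    cplZ K δ s r = Pi.single (cplDiag r) (X ^ δ) + Pi.single (cplSuperdiag r) (-1) := by
  ext1 c
  simp only [cplZ, of_apply, Pi.add_apply, Pi.single_apply, cplIdx_ext_iff, cplDiag, cplSuperdiag,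
    ofLex_toLex, Fin.val_castLE]
  grind

theorem cplZ_apply_cplDiag (r : CplRowIdx δ s) : cplZ K δ s r (cplDiag r) = X ^ δ := by
  simp [cplZ_row, cplDiag_ne_cplSuperdiag]

theorem piv_cplZ {t : CplIdx δ s → ℤ} {r : CplRowIdx δ s}
    (ht : t (cplSuperdiag r) < δ + t (cplDiag r)) : piv t (cplZ K δ s r) = cplDiag r := by
  rw [cplZ_row]
  refine piv_single_add_single (cplDiag_ne_cplSuperdiag r) (pow_ne_zero _ X_ne_zero) ?_
  refine Prod.Lex.toLex_lt_toLex.mpr (.inl ?_)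
  rw [degZ_of_ne_zero (by simp), degZ_of_ne_zero (by simp)]
  simpa using mod_cast ht

theorem isPopov_cplZ (hδ : 0 < δ) {t : CplIdx δ s → ℤ}
    (ht : ∀ r : CplRowIdx δ s, t (cplSuperdiag r) < δ + t (cplDiag r)) :
    IsPopov t (cplZ K δ s) := by
  refine ⟨⟨fun r => by simp [piv_cplZ (ht r)], fun a b hab => ?_⟩, fun r j hj => ?_⟩
  · simpa [piv_cplZ (ht _)] using cplDiag_strictMono hab
  · obtain rfl : cplDiag r = j := WithBot.coe_injective ((piv_cplZ (ht r)).symm.trans hj)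
    rw [cplZ_apply_cplDiag]
    refine ⟨monic_X_pow δ, fun r' hr => ?_⟩
    have hne : cplDiag r ≠ cplDiag r' := cplDiag_strictMono.injective.ne hr.symm
    rcases eq_or_ne (cplDiag r) (cplSuperdiag r') with h | h
    · simpa [cplZ_row, h, (cplDiag_ne_cplSuperdiag r').symm] using hδ
    · simp [cplZ_row, hne, h, bot_lt_iff_ne_bot]

theorem rowSpace_cplZ_le : rowSpace (cplZ K δ s) ≤ leftKernel (cplE K δ s) := by
  refine Submodule.span_le.mpr ?_
  rintro _ ⟨r, rfl⟩
  change cplZ K δ s r ᵥ* cplE K δ s = 0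
  simp only [cplZ_row, add_vecMul, single_vecMul, row_apply', cplE_row, cplDiag, cplSuperdiag,
    ofLex_toLex, Fin.val_castLE, ← Pi.single_smul', smul_eq_mul, ← Pi.single_add]
  rw [Pi.single_eq_zero_iff]
  ring

theorem single_cplSuperdiag (r : CplRowIdx δ s) :
    Pi.single (cplSuperdiag r) 1 =
      (X ^ δ : K[X]) • Pi.single (cplDiag r) (1 : K[X]) - cplZ K δ s r := by
  rw [cplZ_row, ← Pi.single_smul', smul_eq_mul, mul_one, Pi.single_neg]
  abel

theorem single_sub_single_cplFirst_mem_rowSpace_cplZ (j : Fin m) (i : ℕ) (hi : i < cplα δ s j) :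
    Pi.single (toLex ⟨j, ⟨i, hi⟩⟩) 1 - Pi.single (cplFirst δ s j) (X ^ (i * δ)) ∈
      rowSpace (cplZ K δ s) := by
  induction i with
  | zero => simp [cplFirst]
  | succ i ih =>
    let r : CplRowIdx δ s := toLex ⟨j, ⟨i, Nat.lt_sub_of_add_lt hi⟩⟩
    have hstep : Pi.single (cplSuperdiag r) 1 - Pi.single (cplFirst δ s j) (X ^ ((i + 1) * δ)) =
        (X ^ δ : K[X]) • (Pi.single (cplDiag r) 1 - Pi.single (cplFirst δ s j) (X ^ (i * δ))) -
          cplZ K δ s r := by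
      rw [single_cplSuperdiag, smul_sub, ← Pi.single_smul' (cplFirst δ s j), smul_eq_mul, ← pow_add,
        Nat.succ_mul, add_comm δ]
      abel
    change Pi.single (cplSuperdiag r) 1 - _ ∈ _
    rw [hstep]
    exact sub_mem (Submodule.smul_mem _ _ (ih _)) (row_mem_rowSpace _ r)

theorem rowSpace_cplZ : rowSpace (cplZ K δ s) = leftKernel (cplE K δ s) := by
  let G : Matrix (Fin m) (CplIdx δ s) K[X] := of fun j => Pi.single (cplFirst δ s j) 1
  refine rowSpace_cplZ_le.antisymm (leftKernel_le_of_single_sub_vecMul_mem G fun c => ?_)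
  have hreduce : cplE K δ s c ᵥ* G =
      Pi.single (cplFirst δ s (ofLex c).1) (X ^ (((ofLex c).2 : ℕ) * δ)) := by
    rw [cplE_row, single_vecMul]
    ext1 d
    simp [G, Pi.single_apply]
  rw [hreduce]
  exact single_sub_single_cplFirst_mem_rowSpace_cplZ _ _ (ofLex c).2.isLt

end ColumnPartialLinearization

/-- Lemma 5.5: `Z` is the unique basis of the left kernel
of `E` in `0`-Popov form; moreover it is in `(−s̄)`-Popov form, has
`(−s̄)`-row degree `0`, and its `(−s̄)`-pivot profile is
`(α_1+⋯+α_{j−1}+i, δ)`. -/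
theorem cplZ_kernel_popov {K : Type*} [Field K] {m : ℕ}
    (s : Fin m → ℕ) (δ : ℕ) (hδ : 0 < δ) :
    (IsBasisOf (cplZ K δ s) (leftKernel (cplE K δ s)) ∧
      IsPopov (fun _ => (0 : ℤ)) (cplZ K δ s) ∧
      ∀ Z' : Matrix (Lex ((j : Fin m) × Fin (cplα δ s j - 1))) (CplIdx δ s) K[X],
        IsBasisOf Z' (leftKernel (cplE K δ s)) → IsPopov (fun _ => (0 : ℤ)) Z' →
        Z' = cplZ K δ s) ∧
    IsPopov (fun c => -(cplShift δ s c : ℤ)) (cplZ K δ s) ∧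
    (∀ r, rdeg (fun c => -(cplShift δ s c : ℤ)) (cplZ K δ s) r = ((0 : ℤ) : WithBot ℤ)) ∧
    (∀ r, piv (fun c => -(cplShift δ s c : ℤ)) (cplZ K δ s r) =
        ((toLex ⟨(ofLex r).1, Fin.castLE (Nat.sub_le _ 1) (ofLex r).2⟩ : CplIdx δ s) :
          WithBot (CplIdx δ s)) ∧
      pivDeg (fun c => -(cplShift δ s c : ℤ)) (cplZ K δ s r) = δ) := by
  have hshift : ∀ r : CplRowIdx δ s,
      -(cplShift δ s (cplSuperdiag r) : ℤ) < δ + -(cplShift δ s (cplDiag r) : ℤ) := fun r => by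
    have := cplShift_cplSuperdiag_pos hδ r
    rw [cplShift_cplDiag]
    omega
  have hZ : IsPopov (fun _ => (0 : ℤ)) (cplZ K δ s) := isPopov_cplZ hδ fun _ => by simpa using hδ
  refine ⟨⟨⟨hZ.1.isUWeakPopov.linearIndependent, rowSpace_cplZ⟩, hZ, fun Z' hker hZ' => ?_⟩,
    isPopov_cplZ hδ hshift, fun r => ?_, fun r => ⟨piv_cplZ (hshift r), ?_⟩⟩
  · exact hZ'.eq_of_rowSpace_eq hZ (hker.2.trans rowSpace_cplZ.symm)
  · refine (rdegRow_eq_of_piv_eq (piv_cplZ (hshift r))).trans ?_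
    rw [cplZ_apply_cplDiag, cplShift_cplDiag, degZ_of_ne_zero (by simp), natDegree_X_pow,
      ← WithBot.coe_add, add_neg_cancel]
  · rw [pivDeg_eq_of_piv_eq (piv_cplZ (hshift r)), cplZ_apply_cplDiag, natDegree_X_pow]
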